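/- arXiv:2408.00877 — 7 statements merged into one kernel-verified Lean document; each statement's English description precedes it below -/
import Mathlib

section
/- The Levi-Civita-type covering map is canonical up to the factor n: let ω be the bilinear form on ℂ² ≅ ℝ⁴ given by ω((a,b),(c,d)) := Re(a·d̄) − Re(c·b̄). Then for every (Q,P) ∈ (ℂ∖{0}) × ℂ and all tangent vectors u, v ∈ ℂ², the (real) Fréchet derivative DΠ̂ of Π̂ at (Q,P) satisfies ω(DΠ̂(u), DΠ̂(v)) = n · ω(u,v). -/
/-!
Writing `x = (Q, P)` and `u = (a, b)`, `v = (c, d)`, the real derivative of the covering map is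
`(a, b) ↦ (n Qⁿ⁻¹ a, b Q̄¹⁻ⁿ + (1 - n) P Q̄⁻ⁿ ā)` (`fderiv_PiHatLC_apply`). Multiplying the first
component at `u` by the conjugate of the second one at `v` gives
`n a d̄ + n (1 - n) P̄ Q⁻¹ a c`. The last term is symmetric in `u` and `v`, so it drops out of `ω`.
-/

/-- The Levi-Civita-type covering map `Π̂(Q,P) = (Qⁿ, P·Q̄^{1-n})`. -/
noncomputable def PiHatLC (n : ℕ) (x : ℂ × ℂ) : ℂ × ℂ :=
  (x.1 ^ n, x.2 * (starRingEnd ℂ x.1) ^ ((1 : ℤ) - n))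

/-- The standard symplectic form on `ℂ² ≅ ℝ⁴`:
`ω((a,b),(c,d)) = Re(a·d̄) − Re(c·b̄)`. -/
noncomputable def omegaC2 (u v : ℂ × ℂ) : ℝ :=
  (u.1 * starRingEnd ℂ v.2).re - (v.1 * starRingEnd ℂ u.2).re

theorem fderiv_PiHatLC_apply (n : ℕ) (x : ℂ × ℂ) (hx : x.1 ≠ 0) (u : ℂ × ℂ) :
    fderiv ℝ (PiHatLC n) x u =
      ((n : ℂ) * x.1 ^ (n - 1) * u.1,
        u.2 * (starRingEnd ℂ x.1) ^ ((1 : ℤ) - n)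
          + x.2 * ((1 - n : ℂ) * (starRingEnd ℂ x.1) ^ (-(n : ℤ)) * starRingEnd ℂ u.1)) := by
  have hc : starRingEnd ℂ x.1 ≠ 0 := (map_ne_zero _).mpr hx
  have h1 : HasFDerivAt (fun y : ℂ × ℂ => y.1) (ContinuousLinearMap.fst ℝ ℂ ℂ) x :=
    hasFDerivAt_fst
  have h2 : HasFDerivAt (fun y : ℂ × ℂ => y.2) (ContinuousLinearMap.snd ℝ ℂ ℂ) x :=
    hasFDerivAt_snd
  have hconj : HasFDerivAt (fun y : ℂ × ℂ => starRingEnd ℂ y.1)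
      ((Complex.conjCLE : ℂ →L[ℝ] ℂ).comp (ContinuousLinearMap.fst ℝ ℂ ℂ)) x :=
    (Complex.conjCLE : ℂ →L[ℝ] ℂ).hasFDerivAt.comp x h1
  have hpow := ((hasDerivAt_pow n x.1).hasFDerivAt.restrictScalars ℝ).comp x h1
  have hzpow := ((hasDerivAt_zpow ((1 : ℤ) - n) (starRingEnd ℂ x.1)
    (Or.inl hc)).hasFDerivAt.restrictScalars ℝ).comp x hconj
  have h : HasFDerivAt (PiHatLC n) _ x := hpow.prodMk (h2.mul hzpow)
  rw [h.fderiv]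
  have he : (1 : ℤ) - n - 1 = -(n : ℤ) := by ring
  ext1
  · simp
    ring
  · simp [he]
    ring

theorem stmt9 (n : ℕ) (hn : 2 ≤ n) (x : ℂ × ℂ) (hx : x.1 ≠ 0)
    (u v : ℂ × ℂ) :
    omegaC2 (fderiv ℝ (PiHatLC n) x u) (fderiv ℝ (PiHatLC n) x v)
      = n * omegaC2 u v := by
  have hn1 : 1 ≤ n := by omega
  have key : ∀ a b : ℂ × ℂ, (n : ℂ) * x.1 ^ (n - 1) * a.1 * starRingEnd ℂ
      (b.2 * (starRingEnd ℂ x.1) ^ ((1 : ℤ) - n)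
        + x.2 * ((1 - n : ℂ) * (starRingEnd ℂ x.1) ^ (-(n : ℤ)) * starRingEnd ℂ b.1))
      = (n : ℂ) * (a.1 * starRingEnd ℂ b.2)
        + n * (1 - n) * starRingEnd ℂ x.2 * x.1⁻¹ * (a.1 * b.1) := by
    intro a b
    have e1 : x.1 ^ (n - 1) * x.1 ^ ((1 : ℤ) - n) = 1 := by
      rw [← zpow_natCast, ← zpow_add₀ hx, Nat.cast_sub hn1]
      simp
    have e2 : x.1 ^ (n - 1) * x.1 ^ (-(n : ℤ)) = x.1⁻¹ := by
      rw [← zpow_natCast, ← zpow_add₀ hx, Nat.cast_sub hn1, ← zpow_neg_one]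
      congr 1
      push_cast
      ring
    simp only [map_add, map_mul, map_zpow₀, Complex.conj_conj, map_sub, map_one, map_natCast]
    linear_combination (n : ℂ) * a.1 * starRingEnd ℂ b.2 * e1
      + n * (1 - n) * starRingEnd ℂ x.2 * a.1 * b.1 * e2
  rw [fderiv_PiHatLC_apply n x hx, fderiv_PiHatLC_apply n x hx]
  unfold omegaC2
  simp only [key]
  rw [mul_comm v.1 u.1, Complex.add_re, Complex.add_re, ← Complex.ofReal_natCast,
    Complex.re_ofReal_mul, Complex.re_ofReal_mul]
  ring
end

section
/- Under the Levi-Civita-type covering, writing (q,p) = Π̂(Q,P) = (Qⁿ, P·Q̄^{1−n}) for (Q,P) ∈ (ℂ∖{0}) × ℂ, the lifted Hamiltonian and angular momentum are: Ĥ(q,p) = (|P|²/(2m) − Z) · |Q|^{−2(n−1)}, and Im(p·q̄) = Im(P·Q̄). -/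
/-!
Everything follows from the exponent laws. On norms, `|p|² = |P|² |Q|^{2(1-n)}`, while
`n α_n = 2(n - 1)` gives `|q|^{-α_n} = |Q|^{-2(n-1)}`, so `|Q|^{-2(n-1)}` factors out of the
Hamiltonian. For the angular momentum, `p q̄ = P Q̄^{1-n} Q̄^n = P Q̄`.
-/

/-- The exponent `α_n = 2(1 - 1/n)` of the McGehee potential. -/
noncomputable def alphaMc (n : ℕ) : ℝ := 2 * (1 - 1 / n)

theorem stmt10 (n : ℕ) (hn : 2 ≤ n) (Z m : ℝ) (hZ : 0 < Z) (hm : 0 < m)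
    (Q P : ℂ) (hQ : Q ≠ 0) :
    -- lifted Hamiltonian
    ‖P * (starRingEnd ℂ Q) ^ ((1 : ℤ) - n)‖ ^ 2 / (2 * m)
        - Z * ‖Q ^ n‖ ^ (-(alphaMc n))
      = (‖P‖ ^ 2 / (2 * m) - Z) * ‖Q‖ ^ (-(2 * ((n : ℝ) - 1))) ∧
    -- lifted angular momentum
    ((P * (starRingEnd ℂ Q) ^ ((1 : ℤ) - n)) * starRingEnd ℂ (Q ^ n)).im
      = (P * starRingEnd ℂ Q).im := by
  have hQ' : (starRingEnd ℂ) Q ≠ 0 := (map_ne_zero _).mpr hQ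
  have hn0 : (n : ℝ) ≠ 0 := by
    have : n ≠ 0 := by omega
    exact_mod_cast this
  constructor
  · have h1 : ‖Q ^ n‖ ^ (-(alphaMc n)) = ‖Q‖ ^ (-(2 * ((n : ℝ) - 1))) := by
      rw [norm_pow, ← Real.rpow_natCast, ← Real.rpow_mul (norm_nonneg Q)]
      congr 1
      unfold alphaMc
      field_simp
    have h2 : (‖Q‖ ^ ((1 : ℤ) - n)) ^ 2 = ‖Q‖ ^ (-(2 * ((n : ℝ) - 1))) := by
      rw [← Real.rpow_intCast, ← Real.rpow_natCast, ← Real.rpow_mul (norm_nonneg Q)]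
      congr 1
      push_cast
      ring
    rw [h1, norm_mul, norm_zpow, RCLike.norm_conj, mul_pow, h2]
    ring
  · rw [map_pow, mul_assoc, ← zpow_natCast, ← zpow_add₀ hQ', sub_add_cancel, zpow_one]
end

section
/- For E < 0 the regularised energy level in covering coordinates is a 3-sphere: let M_E := {(Q,P) ∈ ℂ² : |P|²/(2m) − E|Q|^{2(n−1)} = Z}. Then (0,0) ∉ M_E, for every (Q₀,P₀) ∈ ℂ² with |Q₀|² + |P₀|² = 1 there is exactly one t > 0 with t·(Q₀,P₀) ∈ M_E, and the radial projection x ↦ x/‖x‖ restricts to a homeomorphism from M_E (with the subspace topology of ℂ² ≅ ℝ⁴) onto the unit sphere of ℂ² ≅ ℝ⁴. -/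
/-!
Along a ray `t ↦ t • u` with `u ≠ 0`, the function `‖P‖² / (2m) - E ‖Q‖^(2(n-1))` is a sum of the
even monomials `t ^ 2` and `t ^ (2(n-1))` with nonnegative coefficients, not both zero
(`ray_value`). It is therefore strictly increasing for `t ≥ 0` (`ray_unique`), and it runs from
`0` to `∞`, so by the intermediate value theorem it takes the value `Z > 0` exactly once
(`ray_exists`). Hence radial projection from the level set to the sphere is a continuous
bijection. The level set is compact, because both nonnegative terms are bounded by `Z`
(`isCompact_MLevel`), and a continuous bijection from a compact space to a Hausdorff space is a
homeomorphism.
-/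

/-- The zero level `M_E = {(Q,P) : |P|²/(2m) − E|Q|^{2(n−1)} = Z}` of the
regularised lifted Hamiltonian at energy `E`. -/
def MLevel (n : ℕ) (Z m E : ℝ) : Set (ℂ × ℂ) :=
  {x | ‖x.2‖ ^ 2 / (2 * m) - E * ‖x.1‖ ^ (2 * (n - 1)) = Z}

/-- The unit sphere of `ℂ² ≅ ℝ⁴` (Euclidean norm). -/
def UnitSphereC2 : Set (ℂ × ℂ) :=
  {x | ‖x.1‖ ^ 2 + ‖x.2‖ ^ 2 = 1}

/-- The Euclidean norm on `ℂ²`; the norm Mathlib puts on `ℂ × ℂ` is the sup norm. -/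
noncomputable def euclNorm (x : ℂ × ℂ) : ℝ := Real.sqrt (‖x.1‖ ^ 2 + ‖x.2‖ ^ 2)

lemma euclNorm_smul_of_mem {u : ℂ × ℂ} (hu : u ∈ UnitSphereC2) {t : ℝ} (ht : 0 < t) :
    euclNorm (t • u) = t := by
  have hu' : ‖u.1‖ ^ 2 + ‖u.2‖ ^ 2 = 1 := hu
  have h : ‖(t • u).1‖ ^ 2 + ‖(t • u).2‖ ^ 2 = t ^ 2 := by
    simp only [Prod.smul_fst, Prod.smul_snd, norm_smul, Real.norm_eq_abs, mul_pow, sq_abs]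
    rw [← mul_add, hu', mul_one]
  rw [euclNorm, h, Real.sqrt_sq ht.le]

lemma euclNorm_pos {x : ℂ × ℂ} (hx : x ≠ 0) : 0 < euclNorm x := by
  apply Real.sqrt_pos.2
  by_cases h1 : x.1 = 0
  · have h2 : x.2 ≠ 0 := fun h2 => hx (Prod.ext h1 h2)
    have := norm_pos_iff.2 h2
    positivity
  · have := norm_pos_iff.2 h1
    positivity

lemma inv_euclNorm_smul_mem {x : ℂ × ℂ} (hx : x ≠ 0) :
    (euclNorm x)⁻¹ • x ∈ UnitSphereC2 := by
  have hr := euclNorm_pos hx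
  have hsq : euclNorm x ^ 2 = ‖x.1‖ ^ 2 + ‖x.2‖ ^ 2 := Real.sq_sqrt (by positivity)
  change ‖((euclNorm x)⁻¹ • x).1‖ ^ 2 + ‖((euclNorm x)⁻¹ • x).2‖ ^ 2 = 1
  simp only [Prod.smul_fst, Prod.smul_snd, norm_smul, Real.norm_eq_abs, mul_pow, sq_abs]
  rw [← mul_add, ← hsq, ← mul_pow, inv_mul_cancel₀ hr.ne', one_pow]

lemma zero_notMem_MLevel {n : ℕ} (hn : 2 ≤ n) {Z m E : ℝ} (hZ : 0 < Z) :
    (0 : ℂ × ℂ) ∉ MLevel n Z m E := by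
  intro h
  have h' : ‖(0 : ℂ × ℂ).2‖ ^ 2 / (2 * m) - E * ‖(0 : ℂ × ℂ).1‖ ^ (2 * (n - 1)) = Z := h
  have hk : 2 * (n - 1) ≠ 0 := by omega
  simp [hk] at h'
  exact hZ.ne h'

/-- On a ray the level-set equation is a polynomial equation in the radial parameter. -/
lemma ray_value (n : ℕ) (Z m E : ℝ) (u : ℂ × ℂ) {t : ℝ} (ht : 0 ≤ t) :
    t • u ∈ MLevel n Z m E ↔
      t ^ 2 * (‖u.2‖ ^ 2 / (2 * m)) + t ^ (2 * (n - 1)) * (-E * ‖u.1‖ ^ (2 * (n - 1))) = Z := by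
  change ‖(t • u).2‖ ^ 2 / (2 * m) - E * ‖(t • u).1‖ ^ (2 * (n - 1)) = Z ↔ _
  simp only [Prod.smul_fst, Prod.smul_snd, norm_smul, Real.norm_eq_abs, abs_of_nonneg ht, mul_pow]
  ring_nf

lemma ray_coeff_pos {n : ℕ} {m E : ℝ} (hm : 0 < m) (hE : E < 0) {u : ℂ × ℂ}
    (hu : u ∈ UnitSphereC2) :
    0 ≤ ‖u.2‖ ^ 2 / (2 * m) ∧ 0 ≤ -E * ‖u.1‖ ^ (2 * (n - 1)) ∧
      0 < ‖u.2‖ ^ 2 / (2 * m) + -E * ‖u.1‖ ^ (2 * (n - 1)) := by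
  have he : 0 < -E := neg_pos.2 hE
  have hu' : ‖u.1‖ ^ 2 + ‖u.2‖ ^ 2 = 1 := hu
  refine ⟨by positivity, by positivity, ?_⟩
  rcases (norm_nonneg u.1).eq_or_lt with h1 | h1
  · have h2 : ‖u.2‖ ^ 2 = 1 := by rw [← h1] at hu'; simpa using hu'
    rw [h2]
    positivity
  · positivity

lemma ray_unique {n : ℕ} (hn : 2 ≤ n) {Z m E : ℝ} (hm : 0 < m) (hE : E < 0) {u : ℂ × ℂ}
    (hu : u ∈ UnitSphereC2) {s t : ℝ} (hs : 0 < s) (ht : 0 < t)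
    (hsM : s • u ∈ MLevel n Z m E) (htM : t • u ∈ MLevel n Z m E) : s = t := by
  rw [ray_value n Z m E u hs.le] at hsM
  rw [ray_value n Z m E u ht.le] at htM
  obtain ⟨hb, ha, hab⟩ := ray_coeff_pos (n := n) hm hE hu
  have hk : 2 * (n - 1) ≠ 0 := by omega
  set b := ‖u.2‖ ^ 2 / (2 * m)
  set a := -E * ‖u.1‖ ^ (2 * (n - 1))
  have mono : ∀ {p q : ℝ}, 0 < p → p < q →
      p ^ 2 * b + p ^ (2 * (n - 1)) * a < q ^ 2 * b + q ^ (2 * (n - 1)) * a := by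
    intro p q hp hpq
    have h1 : p ^ 2 < q ^ 2 := pow_lt_pow_left₀ hpq hp.le two_ne_zero
    have h2 : p ^ (2 * (n - 1)) < q ^ (2 * (n - 1)) := pow_lt_pow_left₀ hpq hp.le hk
    rcases hb.eq_or_lt with h | h
    · have ha' : 0 < a := by linarith
      exact add_lt_add_of_le_of_lt (mul_le_mul_of_nonneg_right h1.le hb)
        (mul_lt_mul_of_pos_right h2 ha')
    · exact add_lt_add_of_lt_of_le (mul_lt_mul_of_pos_right h1 h)
        (mul_le_mul_of_nonneg_right h2.le ha)
  rcases lt_trichotomy s t with h | h | h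
  · exact absurd (mono hs h) (by rw [hsM, htM]; exact lt_irrefl Z)
  · exact h
  · exact absurd (mono ht h) (by rw [hsM, htM]; exact lt_irrefl Z)

lemma ray_exists {n : ℕ} (hn : 2 ≤ n) {Z m E : ℝ} (hZ : 0 < Z) (hm : 0 < m) (hE : E < 0)
    {u : ℂ × ℂ} (hu : u ∈ UnitSphereC2) : ∃ t : ℝ, 0 < t ∧ t • u ∈ MLevel n Z m E := by
  obtain ⟨hb, ha, hab⟩ := ray_coeff_pos (n := n) hm hE hu
  have hval := fun t (ht : 0 ≤ t) => ray_value n Z m E u (t := t) ht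
  have hk : 2 * (n - 1) ≠ 0 := by omega
  set b := ‖u.2‖ ^ 2 / (2 * m)
  set a := -E * ‖u.1‖ ^ (2 * (n - 1))
  -- For `T ≥ 1` both powers of `T` are at least `T`, so the value at `T` is at least `T * (b + a)`.
  have hT1 : 1 ≤ 1 + Z / (b + a) := by
    have : 0 < Z / (b + a) := div_pos hZ hab
    linarith
  set T := 1 + Z / (b + a) with hT
  have hTZ : Z ≤ T * (b + a) := by
    rw [hT, add_mul, div_mul_cancel₀ _ hab.ne']
    linarith
  have h1 : T * b ≤ T ^ 2 * b :=
    mul_le_mul_of_nonneg_right (le_self_pow₀ hT1 two_ne_zero) hb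
  have h2 : T * a ≤ T ^ (2 * (n - 1)) * a :=
    mul_le_mul_of_nonneg_right (le_self_pow₀ hT1 hk) ha
  have hcont : ContinuousOn (fun t : ℝ => t ^ 2 * b + t ^ (2 * (n - 1)) * a) (Set.Icc 0 T) := by
    fun_prop
  obtain ⟨t, ht, htZ⟩ := intermediate_value_Icc (by linarith : (0 : ℝ) ≤ T) hcont
    (show Z ∈ Set.Icc _ _ by
      constructor
      · simp [hk, hZ.le]
      · change Z ≤ T ^ 2 * b + T ^ (2 * (n - 1)) * a
        linarith)
  have htM := (hval t ht.1).2 htZ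
  refine ⟨t, ht.1.lt_of_ne ?_, htM⟩
  rintro rfl
  rw [zero_smul] at htM
  exact zero_notMem_MLevel hn hZ htM

lemma isCompact_MLevel {n : ℕ} (hn : 2 ≤ n) {Z m E : ℝ} (hm : 0 < m) (hE : E < 0) :
    IsCompact (MLevel n Z m E) := by
  have he : 0 < -E := neg_pos.2 hE
  have hk : 2 * (n - 1) ≠ 0 := by omega
  have bound : ∀ {r C : ℝ} {j : ℕ}, j ≠ 0 → r ^ j ≤ C → r ≤ max 1 C := by
    intro r C j hj h
    rcases le_total r 1 with h1 | h1
    · exact h1.trans (le_max_left _ _)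
    · exact ((le_self_pow₀ h1 hj).trans h).trans (le_max_right _ _)
  apply Metric.isCompact_of_isClosed_isBounded
  · exact isClosed_eq (by fun_prop) continuous_const
  · apply (Metric.isBounded_closedBall (x := (0 : ℂ × ℂ))
      (r := max (max 1 (Z / -E)) (max 1 (Z * (2 * m))))).subset
    intro x hx
    have hx' : ‖x.2‖ ^ 2 / (2 * m) - E * ‖x.1‖ ^ (2 * (n - 1)) = Z := hx
    have p1 : 0 ≤ ‖x.2‖ ^ 2 / (2 * m) := by positivity
    have p2 : 0 ≤ -E * ‖x.1‖ ^ (2 * (n - 1)) := by positivity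
    rw [mem_closedBall_zero_iff, Prod.norm_def]
    refine max_le_max (bound hk ?_) (bound two_ne_zero ?_)
    · rw [le_div_iff₀ he]
      linarith
    · rw [← div_le_iff₀ (by positivity)]
      linarith

theorem stmt11 (n : ℕ) (hn : 2 ≤ n) (Z m E : ℝ) (hZ : 0 < Z) (hm : 0 < m)
    (hE : E < 0) :
    ((0, 0) : ℂ × ℂ) ∉ MLevel n Z m E ∧
    (∀ x : ℂ × ℂ, x ∈ UnitSphereC2 →
      ∃! t : ℝ, 0 < t ∧ t • x ∈ MLevel n Z m E) ∧
    ∃ h : (MLevel n Z m E) ≃ₜ UnitSphereC2,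
      ∀ x : MLevel n Z m E,
        (h x : ℂ × ℂ)
          = (Real.sqrt (‖(x : ℂ × ℂ).1‖ ^ 2 + ‖(x : ℂ × ℂ).2‖ ^ 2))⁻¹
              • (x : ℂ × ℂ) := by
  have hne : ∀ x : MLevel n Z m E, (x : ℂ × ℂ) ≠ 0 := fun x h0 =>
    zero_notMem_MLevel hn hZ (h0 ▸ x.2)
  refine ⟨zero_notMem_MLevel hn hZ, fun u hu => ?_, ?_⟩
  · obtain ⟨t, ht, htM⟩ := ray_exists hn hZ hm hE hu
    exact ⟨t, ⟨ht, htM⟩, fun s hs => ray_unique hn hm hE hu hs.1 ht hs.2 htM⟩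
  let f : MLevel n Z m E → UnitSphereC2 := fun x =>
    ⟨(euclNorm x)⁻¹ • (x : ℂ × ℂ), inv_euclNorm_smul_mem (hne x)⟩
  have hfx : ∀ x : MLevel n Z m E, euclNorm x • (f x : ℂ × ℂ) = x := fun x =>
    smul_inv_smul₀ (euclNorm_pos (hne x)).ne' _
  have hf : Continuous f := by
    have hc : Continuous fun x : MLevel n Z m E => euclNorm x := by
      unfold euclNorm
      fun_prop
    exact ((hc.inv₀ fun x => (euclNorm_pos (hne x)).ne').smul
      continuous_subtype_val).subtype_mk _
  have hbij : Function.Bijective f := by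
    constructor
    · intro x y hxy
      have hx := hfx x
      have hy := hfx y
      rw [← hxy] at hy
      have hr : euclNorm x = euclNorm y :=
        ray_unique hn hm hE (f x).2 (euclNorm_pos (hne x)) (euclNorm_pos (hne y))
          (hx.symm ▸ x.2) (hy.symm ▸ y.2)
      exact Subtype.ext (by rw [← hx, hr, hy])
    · intro u
      obtain ⟨t, ht, htM⟩ := ray_exists hn hZ hm hE u.2
      refine ⟨⟨t • (u : ℂ × ℂ), htM⟩, Subtype.ext ?_⟩
      change (euclNorm (t • (u : ℂ × ℂ)))⁻¹ • t • (u : ℂ × ℂ) = u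
      rw [euclNorm_smul_of_mem u.2 ht, inv_smul_smul₀ ht.ne']
  haveI : CompactSpace (MLevel n Z m E) :=
    isCompact_iff_compactSpace.1 (isCompact_MLevel hn hm hE)
  have he : Continuous (Equiv.ofBijective f hbij) := hf
  exact ⟨he.homeoOfEquivCompactToT2, fun x => rfl⟩
end

section
/- For nonnegative energy the pericentric radius is unique: if E ≥ 0, Z > 0, m > 0, ℓ ≠ 0 and n ≥ 2, then there is exactly one r > 0 satisfying the pericenter equation Z/r^{α_n} − ℓ²/(2mr²) = −E, where α_n := 2(1 − 1/n) (so 0 < α_n < 2). -/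
theorem alphaMc_lt_two {n : ℕ} (hn : 2 ≤ n) : alphaMc n < 2 := by
  have h : (0 : ℝ) < 1 / n := one_div_pos.mpr (by exact_mod_cast (by omega : 0 < n))
  unfold alphaMc
  linarith

theorem pericenter_iff {a Z m E ℓ r : ℝ} (hm : 0 < m) (hr : 0 < r) :
    Z / r ^ a - ℓ ^ 2 / (2 * m * r ^ 2) = -E ↔
      Z * r ^ (2 - a) + E * r ^ 2 = ℓ ^ 2 / (2 * m) := by
  have ha : 0 < r ^ a := Real.rpow_pos_of_pos hr a
  rw [Real.rpow_sub hr, Real.rpow_two]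
  have key : Z * (r ^ 2 / r ^ a) + E * r ^ 2 - ℓ ^ 2 / (2 * m) =
      r ^ 2 * (Z / r ^ a - ℓ ^ 2 / (2 * m * r ^ 2) + E) := by
    field_simp
    ring
  have hr2 : r ^ 2 ≠ 0 := by positivity
  constructor
  · intro h
    rw [h, neg_add_cancel, mul_zero] at key
    linarith
  · intro h
    rw [h, sub_self] at key
    rcases mul_eq_zero.mp key.symm with h0 | h0
    · exact absurd h0 hr2
    · linarith

theorem existsUnique_rpow_add_sq {b Z E c : ℝ} (hb : 0 < b) (hZ : 0 < Z) (hE : 0 ≤ E)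
    (hc : 0 < c) : ∃! r : ℝ, 0 < r ∧ Z * r ^ b + E * r ^ 2 = c := by
  have hmono : StrictMonoOn (fun r : ℝ => Z * r ^ b + E * r ^ 2) (Set.Ici 0) := by
    intro x hx y _ hxy
    have hx0 : (0 : ℝ) ≤ x := hx
    have h1 : Z * x ^ b < Z * y ^ b :=
      mul_lt_mul_of_pos_left (Real.rpow_lt_rpow hx0 hxy hb) hZ
    have h2 : E * x ^ 2 ≤ E * y ^ 2 := by gcongr
    exact add_lt_add_of_lt_of_le h1 h2
  have hcont : Continuous (fun r : ℝ => Z * r ^ b + E * r ^ 2) :=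
    ((Real.continuous_rpow_const hb.le).const_mul Z).add ((continuous_pow 2).const_mul E)
  -- At `R` the term `Z * R ^ b` alone already equals `c`.
  set R : ℝ := (c / Z) ^ b⁻¹ with hR
  have hR0 : 0 ≤ R := by positivity
  have hRb : Z * R ^ b = c := by
    rw [hR, Real.rpow_inv_rpow (by positivity) hb.ne']
    field_simp
  have hmem : c ∈ Set.Icc (Z * (0 : ℝ) ^ b + E * 0 ^ 2) (Z * R ^ b + E * R ^ 2) := by
    constructor
    · rw [Real.zero_rpow hb.ne']
      linarith
    · rw [hRb]
      have : 0 ≤ E * R ^ 2 := by positivity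
      linarith
  obtain ⟨r, hr, hrc⟩ := intermediate_value_Icc hR0 hcont.continuousOn hmem
  have hr0 : r ≠ 0 := by
    rintro rfl
    simp only [Real.zero_rpow hb.ne'] at hrc
    linarith
  refine ⟨r, ⟨lt_of_le_of_ne hr.1 hr0.symm, hrc⟩, fun s hs => ?_⟩
  exact hmono.injOn (Set.mem_Ici.mpr hs.1.le) (Set.mem_Ici.mpr hr.1) (hs.2.trans hrc.symm)

theorem stmt13 (n : ℕ) (hn : 2 ≤ n) (Z m E ℓ : ℝ) (hZ : 0 < Z) (hm : 0 < m)
    (hE : 0 ≤ E) (hℓ : ℓ ≠ 0) :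
    ∃! r : ℝ, 0 < r ∧ Z / r ^ (alphaMc n) - ℓ ^ 2 / (2 * m * r ^ 2) = -E := by
  have hc : 0 < ℓ ^ 2 / (2 * m) := by positivity
  refine (existsUnique_congr fun r => and_congr_right fun hr => pericenter_iff hm hr).mpr ?_
  exact existsUnique_rpow_add_sq (sub_pos.mpr (alphaMc_lt_two hn)) hZ hE hc
end

section
/- The Laplace–Runge–Lenz vector is a constant of the motion of the planar Kepler problem: if q, p : I → ℂ are differentiable on an interval I with q(t) ≠ 0, q′(t) = p(t)/m and p′(t) = −Z·q(t)/|q(t)|³ for all t ∈ I, then the function t ↦ q(t)·(|p(t)|²/(2m) − Z/|q(t)|) − p(t)²·\overline{q(t)}/(2m) is constant on I. -/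
/-!
Since `‖p‖² = p * conj p`, the Laplace–Runge–Lenz vector is
`p * (q * conj p - p * conj q) / (2 * m) - Z * q / ‖q‖`. The bracket is `-2i` times the angular
momentum, so its derivative vanishes for a central force, and what is left of the derivative
cancels by `‖q‖² = q * conj q` and `2 * ‖q‖ * ‖q‖' = (p * conj q + q * conj p) / m`.
A function with zero derivative on the (convex) interval is constant there.
-/

/-- The Laplace–Runge–Lenz vector of the planar Kepler problem, in the form
`V̂(q,p) = q·Ĥ(q,p) − p²·q̄/(2m)`. -/
noncomputable def LRL (Z m : ℝ) (q p : ℂ) : ℂ :=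
  q * ((‖p‖ ^ 2 / (2 * m) - Z / ‖q‖ : ℝ) : ℂ)
    - p ^ 2 * starRingEnd ℂ q / (2 * (m : ℂ))

lemma LRL_eq (Z m : ℝ) (q p : ℂ) :
    LRL Z m q p = p * (q * starRingEnd ℂ p - p * starRingEnd ℂ q) / (2 * (m : ℂ))
      - Z * (q / ((‖q‖ : ℝ) : ℂ)) := by
  have h : ((‖p‖ : ℝ) : ℂ) ^ 2 = p * starRingEnd ℂ p := (Complex.mul_conj' p).symm
  unfold LRL
  push_cast
  rw [h]
  ring

lemma hasDerivAt_conj {f : ℝ → ℂ} {f' : ℂ} {t : ℝ} (h : HasDerivAt f f' t) :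
    HasDerivAt (fun s => starRingEnd ℂ (f s)) (starRingEnd ℂ f') t :=
  h.star

lemma hasDerivAt_LRL {Z m : ℝ} (hm : m ≠ 0) {q p : ℝ → ℂ} {t : ℝ} (hq0 : q t ≠ 0)
    (hq : HasDerivAt q (p t / (m : ℂ)) t)
    (hp : HasDerivAt p (-(Z : ℂ) * q t / ((‖q t‖ : ℝ) : ℂ) ^ 3) t) :
    HasDerivAt (fun s => LRL Z m (q s) (p s)) 0 t := by
  have hmC : (m : ℂ) ≠ 0 := by exact_mod_cast hm
  have hr0 : ((‖q t‖ : ℝ) : ℂ) ≠ 0 := by simpa using hq0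
  obtain ⟨d, hd⟩ : ∃ d : ℂ, HasDerivAt (fun s => ((‖q s‖ : ℝ) : ℂ)) d t :=
    ⟨_, (hq.differentiableAt.norm ℝ hq0).hasDerivAt.ofReal_comp⟩
  have hqc := hasDerivAt_conj hq
  have hpc := hasDerivAt_conj hp
  have hrr : ((‖q t‖ : ℝ) : ℂ) ^ 2 = q t * starRingEnd ℂ (q t) := (Complex.mul_conj' _).symm
  -- `‖q‖'` is determined by differentiating `‖q‖ * ‖q‖ = q * conj q`.
  have hrd : d * ((‖q t‖ : ℝ) : ℂ) + ((‖q t‖ : ℝ) : ℂ) * d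
      = p t / m * starRingEnd ℂ (q t) + q t * starRingEnd ℂ (p t / m) := by
    refine (hd.mul hd).unique ((hq.mul hqc).congr_of_eventuallyEq (.of_forall fun s => ?_))
    simpa [sq] using (Complex.mul_conj' (q s)).symm
  have hd' : d = (p t * starRingEnd ℂ (q t) + q t * starRingEnd ℂ (p t))
      / (2 * m * ((‖q t‖ : ℝ) : ℂ)) := by
    simp only [map_div₀, Complex.conj_ofReal] at hrd
    field_simp at hrd ⊢
    linear_combination hrd
  have key := ((hp.mul ((hq.mul hpc).sub (hp.mul hqc))).div_const (2 * (m : ℂ))).sub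
    ((hq.div hd hr0).const_mul (Z : ℂ))
  simp only [LRL_eq]
  refine key.congr_deriv ?_
  rw [hd']
  simp only [map_div₀, map_mul, map_neg, map_pow, Complex.conj_ofReal, Pi.mul_apply, Pi.sub_apply]
  generalize ((‖q t‖ : ℝ) : ℂ) = r at *
  generalize starRingEnd ℂ (q t) = qc at *
  generalize starRingEnd ℂ (p t) = pc at *
  field_simp
  linear_combination (-2 * Z * p t * m) * hrr

theorem stmt15 (Z m : ℝ) (hZ : 0 < Z) (hm : 0 < m)
    (I : Set ℝ) (hI : I.OrdConnected) (q p : ℝ → ℂ)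
    (hq0 : ∀ t ∈ I, q t ≠ 0)
    (hq : ∀ t ∈ I, HasDerivAt q (p t / (m : ℂ)) t)
    (hp : ∀ t ∈ I, HasDerivAt p (-(Z : ℂ) * q t / ((‖q t‖ : ℝ) : ℂ) ^ 3) t) :
    ∀ s ∈ I, ∀ t ∈ I, LRL Z m (q s) (p s) = LRL Z m (q t) (p t) := by
  intro s hs t ht
  have h := hI.convex.norm_image_sub_le_of_norm_hasDerivWithin_le (𝕜 := ℝ)
    (f := fun t => LRL Z m (q t) (p t)) (f' := fun _ => 0) (C := 0)
    (fun u hu => (hasDerivAt_LRL hm.ne' (hq0 u hu) (hq u hu) (hp u hu)).hasDerivWithinAt)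
    (by simp) ht hs
  rw [zero_mul] at h
  exact sub_eq_zero.mp (norm_le_zero_iff.mp h)
end

section
/- Let q, p ∈ ℝ^d, let L be the d×d matrix with entries L_{i,j} := q_j p_i − q_i p_j (i.e. L = p qᵀ − q pᵀ), and let v ∈ ℝ^d be any vector in the span of q and p. Then v vᵀ L + L v vᵀ = ‖v‖² L. -/
/-!
Since `L` is antisymmetric, `v vᵀ L + L v vᵀ = (L v) vᵀ - v (L v)ᵀ = (L v) ∧ v`, where
`x ∧ y = x yᵀ - y xᵀ`. Here `L = p ∧ q` and `L v = ⟨q, v⟩ p - ⟨p, v⟩ q`. Writing `v = a q + b p`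
gives `p ∧ v = a L` and `q ∧ v = -b L`, so the sum is `(a ⟨q, v⟩ + b ⟨p, v⟩) L = ‖v‖² L`.
-/

theorem stmt16 (d : ℕ) (q p v : EuclideanSpace ℝ (Fin d))
    (hv : v ∈ Submodule.span ℝ ({q, p} : Set (EuclideanSpace ℝ (Fin d))))
    (L : Matrix (Fin d) (Fin d) ℝ)
    (hL : ∀ i j, L i j = q j * p i - q i * p j) :
    Matrix.vecMulVec (fun i => v i) (fun i => v i) * L
        + L * Matrix.vecMulVec (fun i => v i) (fun i => v i)
      = ‖v‖ ^ 2 • L := by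
  obtain ⟨a, b, hab⟩ := Submodule.mem_span_pair.1 hv
  have hvi : ∀ i, v i = a * q i + b * p i := fun i => by simp [← hab]
  have hnorm : ‖v‖ ^ 2 = a * ∑ k, q k * v k + b * ∑ k, p k * v k := by
    rw [EuclideanSpace.real_norm_sq_eq, Finset.mul_sum, Finset.mul_sum,
      ← Finset.sum_add_distrib]
    refine Finset.sum_congr rfl fun k _ => ?_
    linear_combination v k * hvi k
  ext i j
  have hleft : ∑ k, v i * v k * L k j
      = v i * (q j * ∑ k, p k * v k - p j * ∑ k, q k * v k) := by
    simp only [Finset.mul_sum, ← Finset.sum_sub_distrib, hL]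
    exact Finset.sum_congr rfl fun k _ => by ring
  have hright : ∑ k, L i k * (v k * v j)
      = v j * (p i * ∑ k, q k * v k - q i * ∑ k, p k * v k) := by
    simp only [Finset.mul_sum, ← Finset.sum_sub_distrib, hL]
    exact Finset.sum_congr rfl fun k _ => by ring
  simp only [Matrix.add_apply, Matrix.mul_apply, Matrix.vecMulVec_apply, Matrix.smul_apply,
    smul_eq_mul]
  rw [hleft, hright, hnorm, hL, hvi i, hvi j]
  ring
end

section
/- The Dirac bracket on T*S^{d−1} yields the Snyder brackets: let F₁(q,p) := ⟨q,q⟩ − 1 and F₂(q,p) := ⟨q,p⟩ on ℝ^d × ℝ^d, and define the Dirac bracket of differentiable functions a, b by {a,b}_D := {a,b} + ½{a,F₁}{F₂,b} − ½{a,F₂}{F₁,b}. Then at every point (q,p) with ‖q‖ = 1 the coordinate functions satisfy, for all 1 ≤ i,k ≤ d: {q_i,q_k}_D = 0, {q_i,p_k}_D = δ_{i,k} − q_i q_k, and {p_i,p_k}_D = q_k p_i − q_i p_k = L_{i,k}(q,p). -/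
/-!
The differentials of the functions involved at `(q, p)`, evaluated on `(u, v)`, are `dqᵢ = uᵢ`,
`dpᵢ = vᵢ`, `dF₁ = 2⟨q, u⟩` and `dF₂ = ⟨u, p⟩ + ⟨q, v⟩`. Inserting the coordinate vectors yields
`{qᵢ, F₁} = 0`, `{qᵢ, F₂} = qᵢ`, `{pᵢ, F₁} = -2qᵢ`, `{pᵢ, F₂} = -pᵢ`, and together with
`{qᵢ, pₖ} = δᵢₖ` and the antisymmetry of the bracket these determine all the Dirac brackets.
-/

open scoped BigOperators

/-- The canonical Poisson bracket on `ℝ^d × ℝ^d` with coordinates `(q,p)`: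
`{f,g} = Σⱼ (∂f/∂qⱼ·∂g/∂pⱼ − ∂f/∂pⱼ·∂g/∂qⱼ)`. -/
noncomputable def poissonBracket (d : ℕ)
    (f g : (Fin d → ℝ) × (Fin d → ℝ) → ℝ)
    (x : (Fin d → ℝ) × (Fin d → ℝ)) : ℝ :=
  ∑ j : Fin d,
    (fderiv ℝ f x (Pi.single j 1, 0) * fderiv ℝ g x (0, Pi.single j 1)
      - fderiv ℝ f x (0, Pi.single j 1) * fderiv ℝ g x (Pi.single j 1, 0))

/-- The angular momentum functions `L_{i,j}(q,p) = qⱼpᵢ − qᵢpⱼ`. -/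
def angMom (d : ℕ) (i j : Fin d) (x : (Fin d → ℝ) × (Fin d → ℝ)) : ℝ :=
  x.1 j * x.2 i - x.1 i * x.2 j

/-- The constraint function `F₁(q,p) = ⟨q,q⟩ − 1`. -/
def constraintF1 (d : ℕ) (x : (Fin d → ℝ) × (Fin d → ℝ)) : ℝ :=
  (∑ j : Fin d, x.1 j * x.1 j) - 1

/-- The constraint function `F₂(q,p) = ⟨q,p⟩`. -/
def constraintF2 (d : ℕ) (x : (Fin d → ℝ) × (Fin d → ℝ)) : ℝ :=
  ∑ j : Fin d, x.1 j * x.2 j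

/-- The Dirac bracket
`{a,b}_D = {a,b} + ½{a,F₁}{F₂,b} − ½{a,F₂}{F₁,b}`. -/
noncomputable def diracBracket (d : ℕ)
    (a b : (Fin d → ℝ) × (Fin d → ℝ) → ℝ)
    (x : (Fin d → ℝ) × (Fin d → ℝ)) : ℝ :=
  poissonBracket d a b x
    + (1 / 2) * poissonBracket d a (constraintF1 d) x
        * poissonBracket d (constraintF2 d) b x
    - (1 / 2) * poissonBracket d a (constraintF2 d) x
        * poissonBracket d (constraintF1 d) b x

theorem fderiv_coord_fst {d : ℕ} (i : Fin d) (x w : (Fin d → ℝ) × (Fin d → ℝ)) :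
    fderiv ℝ (fun y : (Fin d → ℝ) × (Fin d → ℝ) => y.1 i) x w = w.1 i := by
  have h : HasFDerivAt (fun y : (Fin d → ℝ) × (Fin d → ℝ) => y.1 i)
      ((ContinuousLinearMap.proj (R := ℝ) (φ := fun _ : Fin d => ℝ) i).comp
        (ContinuousLinearMap.fst ℝ (Fin d → ℝ) (Fin d → ℝ))) x :=
    ((ContinuousLinearMap.proj (R := ℝ) (φ := fun _ : Fin d => ℝ) i).comp
      (ContinuousLinearMap.fst ℝ (Fin d → ℝ) (Fin d → ℝ))).hasFDerivAt
  rw [h.fderiv]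
  rfl

theorem fderiv_coord_snd {d : ℕ} (i : Fin d) (x w : (Fin d → ℝ) × (Fin d → ℝ)) :
    fderiv ℝ (fun y : (Fin d → ℝ) × (Fin d → ℝ) => y.2 i) x w = w.2 i := by
  have h : HasFDerivAt (fun y : (Fin d → ℝ) × (Fin d → ℝ) => y.2 i)
      ((ContinuousLinearMap.proj (R := ℝ) (φ := fun _ : Fin d => ℝ) i).comp
        (ContinuousLinearMap.snd ℝ (Fin d → ℝ) (Fin d → ℝ))) x :=
    ((ContinuousLinearMap.proj (R := ℝ) (φ := fun _ : Fin d => ℝ) i).comp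
      (ContinuousLinearMap.snd ℝ (Fin d → ℝ) (Fin d → ℝ))).hasFDerivAt
  rw [h.fderiv]
  rfl

theorem fderiv_constraintF1 {d : ℕ} (x w : (Fin d → ℝ) × (Fin d → ℝ)) :
    fderiv ℝ (constraintF1 d) x w = ∑ j, 2 * x.1 j * w.1 j := by
  unfold constraintF1
  rw [fderiv_sub_const, fderiv_fun_sum (fun j _ => by fun_prop), ContinuousLinearMap.sum_apply]
  refine Finset.sum_congr rfl fun j _ => ?_
  rw [fderiv_fun_mul (by fun_prop) (by fun_prop)]
  simp only [ContinuousLinearMap.add_apply, ContinuousLinearMap.smul_apply, fderiv_coord_fst,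
    smul_eq_mul]
  ring

theorem fderiv_constraintF2 {d : ℕ} (x w : (Fin d → ℝ) × (Fin d → ℝ)) :
    fderiv ℝ (constraintF2 d) x w = ∑ j, (x.1 j * w.2 j + x.2 j * w.1 j) := by
  unfold constraintF2
  rw [fderiv_fun_sum (fun j _ => by fun_prop), ContinuousLinearMap.sum_apply]
  refine Finset.sum_congr rfl fun j _ => ?_
  rw [fderiv_fun_mul (by fun_prop) (by fun_prop)]
  simp only [ContinuousLinearMap.add_apply, ContinuousLinearMap.smul_apply, fderiv_coord_fst,
    fderiv_coord_snd, smul_eq_mul]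

theorem stmt19 (d : ℕ) (x : (Fin d → ℝ) × (Fin d → ℝ))
    (hx : ∑ j : Fin d, x.1 j ^ 2 = 1) :
    ∀ i k : Fin d,
      diracBracket d (fun y => y.1 i) (fun y => y.1 k) x = 0 ∧
      diracBracket d (fun y => y.1 i) (fun y => y.2 k) x
        = (if i = k then (1 : ℝ) else 0) - x.1 i * x.1 k ∧
      diracBracket d (fun y => y.2 i) (fun y => y.2 k) x
        = x.1 k * x.2 i - x.1 i * x.2 k ∧
      x.1 k * x.2 i - x.1 i * x.2 k = angMom d i k x := by
  intro i k
  refine ⟨?_, ?_, ?_, rfl⟩ <;>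
    simp only [diracBracket, poissonBracket, fderiv_coord_fst, fderiv_coord_snd,
      fderiv_constraintF1, fderiv_constraintF2] <;>
    simp [Pi.single_apply, eq_comm] <;>
    ring
end
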